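/- Let d ∈ ℕ with d ≥ 1, let Σ be a symmetric positive definite d × d real matrix, and for μ ∈ ℝ^d let N(y; μ, Σ) = ((2π)^d det Σ)^{-1/2} exp(−(1/2)(y − μ)^T Σ^{-1}(y − μ)). Let μ_1, …, μ_N ∈ ℝ^d and α_1, …, α_N ≥ 0 with Σ_{l=1}^N α_l = 1, and define the mixture density m(y) = Σ_{l=1}^N α_l N(y; μ_l, Σ). Then for each index i, the Kullback–Leibler divergence of the Gaussian component from the mixture is bounded below by the closed-form approximation used in the expected information gain: ∫_{ℝ^d} N(y; μ_i, Σ) · ln( N(y; μ_i, Σ) / m(y) ) dy ≥ c − ln( Σ_{l=1}^N α_l Z_{i,l} ), where c = −(1/2)( ln((2π)^d det Σ) + d ) and Z_{i,l} = ((2π)^d det(2Σ))^{-1/2} exp(−(1/2)(μ_i − μ_l)^T (2Σ)^{-1} (μ_i − μ_l)). -/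

import Mathlib

open MeasureTheory Real Matrix

/-- The multivariate Gaussian density with mean `μ` and covariance `S`. -/
noncomputable def gaussDensity (d : ℕ) (S : Matrix (Fin d) (Fin d) ℝ)
    (μ y : Fin d → ℝ) : ℝ :=
  ((2 * π) ^ d * S.det) ^ (-(1/2) : ℝ) *
    Real.exp (-(1/2) * ((y - μ) ⬝ᵥ (S⁻¹ *ᵥ (y - μ))))


open ProbabilityTheory in
lemma std_int : Integrable (fun x : ℝ => gaussianPDFReal 0 1 x) := integrable_gaussianPDFReal 0 1

open ProbabilityTheory in
lemma std_sq_integral : ∫ x : ℝ, x ^ 2 * gaussianPDFReal 0 1 x = 1 := by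
  have h := variance_id_gaussianReal (μ := 0) (v := 1)
  rw [variance_of_integral_eq_zero (by fun_prop) (by simp),
    integral_gaussianReal_eq_integral_smul (by simp)] at h
  simpa [mul_comm] using h

lemma std_sq_int : Integrable (fun x : ℝ => x ^ 2 * ProbabilityTheory.gaussianPDFReal 0 1 x) := by
  by_contra h
  have := std_sq_integral
  rw [integral_undef h] at this
  simp at this

/-- standard Gaussian density on `Fin d → ℝ` -/
noncomputable def stdG (d : ℕ) (x : Fin d → ℝ) : ℝ :=
  ∏ j, ProbabilityTheory.gaussianPDFReal 0 1 (x j)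

lemma stdG_cont (d : ℕ) : Continuous (stdG d) := by
  unfold stdG ProbabilityTheory.gaussianPDFReal
  fun_prop

lemma stdG_int (d : ℕ) : Integrable (stdG d) := by
  unfold stdG
  exact Integrable.fintype_prod (f := fun _ x => ProbabilityTheory.gaussianPDFReal 0 1 x)
    (fun _ => std_int)

lemma stdG_integral (d : ℕ) : ∫ x, stdG d x = 1 := by
  unfold stdG
  rw [integral_fintype_prod_volume_eq_prod
    (f := fun (_ : Fin d) x => ProbabilityTheory.gaussianPDFReal 0 1 x)]
  simp [ProbabilityTheory.integral_gaussianPDFReal_eq_one]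

lemma stdG_sq_eq (d : ℕ) (k : Fin d) (x : Fin d → ℝ) : x k ^ 2 * stdG d x =
    ∏ j, ((if j = k then (x j) ^ 2 else 1) * ProbabilityTheory.gaussianPDFReal 0 1 (x j)) := by
  rw [Finset.prod_mul_distrib, stdG]
  simp

lemma stdG_sq_int1 (d : ℕ) (k : Fin d) : Integrable (fun x => x k ^ 2 * stdG d x) := by
  simp_rw [stdG_sq_eq]
  refine Integrable.fintype_prod
    (f := fun j x => (if j = k then x ^ 2 else 1) * ProbabilityTheory.gaussianPDFReal 0 1 x) ?_
  intro j
  by_cases h : j = k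
  · simpa [h] using std_sq_int
  · simpa [h] using std_int

lemma stdG_sq_integral1 (d : ℕ) (k : Fin d) : ∫ x, x k ^ 2 * stdG d x = 1 := by
  simp_rw [stdG_sq_eq]
  rw [integral_fintype_prod_volume_eq_prod
    (f := fun j x => (if j = k then x ^ 2 else 1) * ProbabilityTheory.gaussianPDFReal 0 1 x)]
  refine Finset.prod_eq_one fun j _ => ?_
  by_cases h : j = k
  · simpa [h] using std_sq_integral
  · simp [h, ProbabilityTheory.integral_gaussianPDFReal_eq_one]

lemma stdG_sq_int (d : ℕ) : Integrable (fun x => stdG d x * (x ⬝ᵥ x)) := by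
  have : (fun x => stdG d x * (x ⬝ᵥ x)) = fun x => ∑ k, x k ^ 2 * stdG d x := by
    ext x; rw [← Finset.sum_mul, mul_comm]; simp [dotProduct, sq]
  rw [this]
  exact integrable_finsetSum _ fun k _ => stdG_sq_int1 d k

lemma stdG_sq_integral (d : ℕ) : ∫ x, stdG d x * (x ⬝ᵥ x) = d := by
  have : (fun x => stdG d x * (x ⬝ᵥ x)) = fun x => ∑ k, x k ^ 2 * stdG d x := by
    ext x; rw [← Finset.sum_mul, mul_comm]; simp [dotProduct, sq]
  rw [this, integral_finsetSum _ fun k _ => stdG_sq_int1 d k]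
  simp [stdG_sq_integral1]

lemma chg_int (d : ℕ) (B : Matrix (Fin d) (Fin d) ℝ) (hB : B.det ≠ 0) (μ : Fin d → ℝ)
    (f : (Fin d → ℝ) → ℝ) (hf : Continuous f) (hi : Integrable f) :
    Integrable (fun y => |B.det| * f (B *ᵥ (y - μ))) := by
  have hc : Continuous (toLin' B) := LinearMap.continuous_on_pi _
  have h1 : Integrable f (Measure.map (toLin' B) volume) := by
    rw [Real.map_matrix_volume_pi_eq_smul_volume_pi hB]
    exact hi.smul_measure (by simp)
  have h2 := (integrable_map_measure hf.aestronglyMeasurable hc.aemeasurable).1 h1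
  have h3 := (h2.comp_sub_right μ).const_mul |B.det|
  simpa [Function.comp_def] using h3

lemma chg_integral (d : ℕ) (B : Matrix (Fin d) (Fin d) ℝ) (hB : B.det ≠ 0) (μ : Fin d → ℝ)
    (f : (Fin d → ℝ) → ℝ) (hf : Continuous f) :
    ∫ y, |B.det| * f (B *ᵥ (y - μ)) = ∫ x, f x := by
  have hc : Continuous (toLin' B) := LinearMap.continuous_on_pi _
  have h2 := integral_map (μ := volume) hc.aemeasurable (f := f) hf.aestronglyMeasurable
  rw [Real.map_matrix_volume_pi_eq_smul_volume_pi hB, integral_smul_measure] at h2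
  rw [integral_const_mul, integral_sub_right_eq_self (fun y => f (B *ᵥ y)) μ]
  simp only [toLin'_apply] at h2
  rw [← h2, ENNReal.toReal_ofReal (abs_nonneg _), smul_eq_mul, abs_inv, ← mul_assoc,
    mul_inv_cancel₀ (by simpa using hB), one_mul]

open scoped MatrixOrder in
lemma factorB (d : ℕ) (S : Matrix (Fin d) (Fin d) ℝ) (hS : S.PosDef) :
    ∃ B : Matrix (Fin d) (Fin d) ℝ, B.det ≠ 0 ∧ S.det = (|B.det| ^ 2)⁻¹ ∧
      ∀ x, x ⬝ᵥ (S⁻¹ *ᵥ x) = (B *ᵥ x) ⬝ᵥ (B *ᵥ x) := by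
  obtain ⟨B, hB⟩ := CStarAlgebra.nonneg_iff_eq_star_mul_self.mp hS.inv.posSemidef.nonneg
  have hp := hS.det_pos
  have hdet : S⁻¹.det = B.det * B.det := by
    rw [hB, det_mul, star_eq_conjTranspose, det_conjTranspose]; simp
  rw [det_nonsing_inv, Ring.inverse_eq_inv'] at hdet
  refine ⟨B, ?_, ?_, ?_⟩
  · intro h
    rw [h] at hdet
    simp at hdet
    exact hp.ne' hdet
  · rw [sq_abs, sq, ← hdet, inv_inv]
  · intro x
    rw [hB, ← mulVec_mulVec, star_eq_conjTranspose, dotProduct_mulVec, vecMul_conjTranspose]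
    simp

lemma gauss_eq (d : ℕ) (S B : Matrix (Fin d) (Fin d) ℝ) (h0 : B.det ≠ 0)
    (h1 : S.det = (|B.det| ^ 2)⁻¹)
    (h2 : ∀ x, x ⬝ᵥ (S⁻¹ *ᵥ x) = (B *ᵥ x) ⬝ᵥ (B *ᵥ x)) (μ y : Fin d → ℝ) :
    gaussDensity d S μ y = |B.det| * stdG d (B *ᵥ (y - μ)) := by
  have hb : 0 < |B.det| := abs_pos.2 h0
  unfold gaussDensity stdG ProbabilityTheory.gaussianPDFReal
  rw [h2, h1, Finset.prod_mul_distrib, ← Real.exp_sum, ← mul_assoc]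
  congr 1
  · rw [Real.mul_rpow (by positivity) (by positivity), mul_comm, Real.rpow_neg (by positivity),
      Real.rpow_neg (by positivity), ← Real.sqrt_eq_rpow, ← Real.sqrt_eq_rpow, Real.sqrt_inv,
      inv_inv, Real.sqrt_sq hb.le]
    have hs : √((2 * π) ^ d) = √(2 * π) ^ d := by
      rw [show (2 * π) ^ d = (√(2 * π) ^ d) ^ 2 by
        rw [← pow_mul, mul_comm d 2, pow_mul, Real.sq_sqrt (by positivity)],
        Real.sqrt_sq (by positivity)]
    rw [hs]
    simp only [NNReal.coe_one, mul_one, Finset.prod_const, Finset.card_univ, Fintype.card_fin,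
      inv_pow]
  · congr 1
    simp only [dotProduct, Finset.mul_sum]
    refine Finset.sum_congr rfl fun j _ => ?_
    simp only [NNReal.coe_one]
    ring

lemma gauss_pos (d : ℕ) (S : Matrix (Fin d) (Fin d) ℝ) (hS : S.PosDef) (μ y : Fin d → ℝ) :
    0 < gaussDensity d S μ y := by
  have := hS.det_pos
  unfold gaussDensity
  positivity

lemma gauss_cont (d : ℕ) (S : Matrix (Fin d) (Fin d) ℝ) (μ : Fin d → ℝ) :
    Continuous (gaussDensity d S μ) := by
  unfold gaussDensity
  fun_prop

lemma gauss_int (d : ℕ) (S : Matrix (Fin d) (Fin d) ℝ) (hS : S.PosDef) (μ : Fin d → ℝ) :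
    Integrable (gaussDensity d S μ) := by
  obtain ⟨B, h0, h1, h2⟩ := factorB d S hS
  rw [funext (gauss_eq d S B h0 h1 h2 μ)]
  exact chg_int d B h0 μ _ (stdG_cont d) (stdG_int d)

lemma gauss_integral (d : ℕ) (S : Matrix (Fin d) (Fin d) ℝ) (hS : S.PosDef) (μ : Fin d → ℝ) :
    ∫ y, gaussDensity d S μ y = 1 := by
  obtain ⟨B, h0, h1, h2⟩ := factorB d S hS
  rw [funext (gauss_eq d S B h0 h1 h2 μ), chg_integral d B h0 μ _ (stdG_cont d), stdG_integral]

lemma sq_cont (d : ℕ) : Continuous fun x => stdG d x * (x ⬝ᵥ x) := by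
  have := stdG_cont d
  fun_prop

lemma gauss_sq_int (d : ℕ) (S : Matrix (Fin d) (Fin d) ℝ) (hS : S.PosDef) (μ : Fin d → ℝ) :
    Integrable (fun y => gaussDensity d S μ y * ((y - μ) ⬝ᵥ (S⁻¹ *ᵥ (y - μ)))) := by
  obtain ⟨B, h0, h1, h2⟩ := factorB d S hS
  simp_rw [gauss_eq d S B h0 h1 h2 μ, h2, mul_assoc]
  exact chg_int d B h0 μ _ (sq_cont d) (stdG_sq_int d)

lemma gauss_sq_integral (d : ℕ) (S : Matrix (Fin d) (Fin d) ℝ) (hS : S.PosDef) (μ : Fin d → ℝ) :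
    ∫ y, gaussDensity d S μ y * ((y - μ) ⬝ᵥ (S⁻¹ *ᵥ (y - μ))) = d := by
  obtain ⟨B, h0, h1, h2⟩ := factorB d S hS
  simp_rw [gauss_eq d S B h0 h1 h2 μ, h2, mul_assoc]
  rw [chg_integral d B h0 μ _ (sq_cont d), stdG_sq_integral]

lemma inv_smul_real (d : ℕ) (S : Matrix (Fin d) (Fin d) ℝ) (hS : S.PosDef) (t : ℝ) (ht : t ≠ 0) :
    (t • S)⁻¹ = t⁻¹ • S⁻¹ := by
  have := hS.det_pos
  apply Matrix.inv_eq_left_inv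
  rw [smul_mul_smul_comm, inv_mul_cancel₀ ht, nonsing_inv_mul _ (by simpa using this.ne'), one_smul]

lemma gauss_mul (d : ℕ) (S : Matrix (Fin d) (Fin d) ℝ) (hS : S.PosDef) (a b y : Fin d → ℝ) :
    gaussDensity d S a y * gaussDensity d S b y =
      (((2 * π) ^ d * ((2 : ℝ) • S).det) ^ (-(1/2) : ℝ) *
      Real.exp (-(1/2) * ((a - b) ⬝ᵥ (((2 : ℝ) • S)⁻¹ *ᵥ (a - b))))) *
      gaussDensity d ((1/2 : ℝ) • S) ((1/2 : ℝ) • (a + b)) y := by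
  obtain ⟨B, h0, h1, h2⟩ := factorB d S hS
  have hp := hS.det_pos
  unfold gaussDensity
  rw [mul_mul_mul_comm, mul_mul_mul_comm (((2 * π) ^ d * ((2 : ℝ) • S).det) ^ (-(1/2) : ℝ)),
    ← Real.exp_add, ← Real.exp_add,
    ← Real.mul_rpow (by positivity) (by positivity), ← Real.mul_rpow (by simp; positivity)
    (by simp; positivity)]
  congr 2
  · simp only [det_smul, Fintype.card_fin]
    have : (2:ℝ) ^ d * (1 / 2) ^ d = 1 := by rw [← mul_pow]; norm_num
    linear_combination (-((2 * π) ^ d * S.det * ((2 * π) ^ d * S.det))) * this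
  · rw [inv_smul_real d S hS 2 (by norm_num), inv_smul_real d S hS (1/2) (by norm_num)]
    simp only [smul_mulVec, dotProduct_smul, h2]
    set u := B *ᵥ y
    simp only [mulVec_sub, mulVec_smul, mulVec_add]
    simp only [dotProduct_sub, sub_dotProduct, dotProduct_smul, smul_dotProduct, dotProduct_add,
      add_dotProduct, smul_eq_mul]
    rw [dotProduct_comm (B *ᵥ b) (B *ᵥ a), dotProduct_comm (B *ᵥ a) (B *ᵥ y),
      dotProduct_comm (B *ᵥ b) (B *ᵥ y)]
    ring

lemma quad_bound (d : ℕ) (S : Matrix (Fin d) (Fin d) ℝ) (hS : S.PosDef) (a b y : Fin d → ℝ) :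
    (y - b) ⬝ᵥ (S⁻¹ *ᵥ (y - b)) ≤
      2 * ((y - a) ⬝ᵥ (S⁻¹ *ᵥ (y - a))) + 2 * ((a - b) ⬝ᵥ (S⁻¹ *ᵥ (a - b))) := by
  obtain ⟨B, h0, h1, h2⟩ := factorB d S hS
  simp only [h2]
  have h := dotProduct_self_star_nonneg (B *ᵥ (y - a) - B *ᵥ (a - b))
  simp only [star_trivial] at h
  have e : B *ᵥ (y - b) = B *ᵥ (y - a) + B *ᵥ (a - b) := by rw [← mulVec_add]; simp
  rw [e]
  simp only [dotProduct_sub, sub_dotProduct, dotProduct_add, add_dotProduct] at h ⊢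
  linarith

lemma log_gauss (d : ℕ) (S : Matrix (Fin d) (Fin d) ℝ) (hS : S.PosDef) (μ y : Fin d → ℝ) :
    Real.log (gaussDensity d S μ y) = -(1/2) * Real.log ((2 * π) ^ d * S.det)
      - (1/2) * ((y - μ) ⬝ᵥ (S⁻¹ *ᵥ (y - μ))) := by
  have := hS.det_pos
  unfold gaussDensity
  rw [Real.log_mul (by positivity) (by positivity), Real.log_exp, Real.log_rpow (by positivity)]
  ring

/-- The KL divergence of a Gaussian component from a Gaussian mixture with
common covariance is bounded below by the closed-form approximation
`c − ln(Σ_l α_l Z_{i,l})` used in the expected information gain. -/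
theorem gauss_mixture_kl_lower_bound
    (d N : ℕ) (hd : 1 ≤ d) (S : Matrix (Fin d) (Fin d) ℝ) (hS : S.PosDef)
    (μ : Fin N → (Fin d → ℝ))
    (α : Fin N → ℝ) (hα_nonneg : ∀ l, 0 ≤ α l) (hα_sum : ∑ l, α l = 1)
    (m : (Fin d → ℝ) → ℝ)
    (hm : ∀ y, m y = ∑ l, α l * gaussDensity d S (μ l) y)
    (c : ℝ) (hc : c = -(1/2) * (Real.log ((2 * π) ^ d * S.det) + d))
    (Z : Fin N → Fin N → ℝ)
    (hZ : ∀ i l, Z i l = ((2 * π) ^ d * ((2 : ℝ) • S).det) ^ (-(1/2) : ℝ) *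
      Real.exp (-(1/2) * ((μ i - μ l) ⬝ᵥ (((2 : ℝ) • S)⁻¹ *ᵥ (μ i - μ l)))))
    (i : Fin N) :
    ∫ y, gaussDensity d S (μ i) y * Real.log (gaussDensity d S (μ i) y / m y)
      ≥ c - Real.log (∑ l, α l * Z i l) := by
  have hSd := hS.det_pos
  have hSH : ((1/2 : ℝ) • S).PosDef := hS.smul (by norm_num)
  have hZpos : ∀ l, 0 < Z i l := by
    intro l; rw [hZ]
    have : 0 < ((2 : ℝ) • S).det := by simp; positivity
    positivity
  obtain ⟨k, hk⟩ : ∃ k, 0 < α k := by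
    by_contra! h
    have : ∑ l, α l ≤ 0 := Finset.sum_nonpos fun l _ => h l
    linarith
  have hmk : ∀ y, α k * gaussDensity d S (μ k) y ≤ m y := by
    intro y
    rw [hm]
    exact Finset.single_le_sum (f := fun l => α l * gaussDensity d S (μ l) y)
      (fun l _ => mul_nonneg (hα_nonneg l) (gauss_pos d S hS _ _).le) (Finset.mem_univ k)
  have hmpos : ∀ y, 0 < m y := fun y =>
    lt_of_lt_of_le (mul_pos hk (gauss_pos d S hS _ _)) (hmk y)
  have hmcont : Continuous m := by
    rw [funext hm]
    exact continuous_finsetSum _ fun l _ => continuous_const.mul (gauss_cont d S _)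
  set K := ∑ l, α l * Z i l with hK
  have hKpos : 0 < K := Finset.sum_pos' (fun l _ => mul_nonneg (hα_nonneg l) (hZpos l).le)
    ⟨k, Finset.mem_univ k, mul_pos hk (hZpos k)⟩
  set p := gaussDensity d S (μ i) with hp
  have hppos : ∀ y, 0 < p y := fun y => gauss_pos d S hS _ _
  have hpcont : Continuous p := gauss_cont d S _
  -- the cross term
  have hpm : ∀ y, p y * m y = ∑ l, α l * Z i l *
      gaussDensity d ((1/2 : ℝ) • S) ((1/2 : ℝ) • (μ i + μ l)) y := by
    intro y
    rw [hm, Finset.mul_sum]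
    refine Finset.sum_congr rfl fun l _ => ?_
    rw [mul_left_comm, hp, gauss_mul d S hS, hZ, ← mul_assoc (α l)]
  have hpm_int : Integrable (fun y => p y * m y) := by
    simp_rw [hpm]
    exact integrable_finsetSum _ fun l _ => (gauss_int d _ hSH _).const_mul _
  have hpm_val : ∫ y, p y * m y = K := by
    simp_rw [hpm]
    rw [integral_finsetSum _ fun l _ => (gauss_int d _ hSH _).const_mul _]
    simp_rw [integral_const_mul, gauss_integral d _ hSH]
    simp [hK]
  set q : (Fin d → ℝ) → ℝ := fun y => (y - μ i) ⬝ᵥ (S⁻¹ *ᵥ (y - μ i)) with hq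
  set L := Real.log ((2 * π) ^ d * S.det) with hL
  have hp_int : Integrable p := gauss_int d S hS _
  have hpq_int : Integrable (fun y => p y * q y) := gauss_sq_int d S hS _
  have hp_val : ∫ y, p y = 1 := gauss_integral d S hS _
  have hpq_val : ∫ y, p y * q y = d := gauss_sq_integral d S hS _
  have hlogp : ∀ y, Real.log (p y) = -(1/2) * L - (1/2) * q y := fun y => log_gauss d S hS _ _
  -- lower function
  have hA : Integrable (fun y => (-(1/2) * L - Real.log K + 1) * p y) := hp_int.const_mul _
  have hB : Integrable (fun y => (1/2 : ℝ) * (p y * q y)) := hpq_int.const_mul _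
  have hC : Integrable (fun y => K⁻¹ * (p y * m y)) := hpm_int.const_mul _
  have hlow_int : Integrable (fun y => (-(1/2) * L - Real.log K + 1) * p y
      - (1/2 : ℝ) * (p y * q y) - K⁻¹ * (p y * m y)) := (hA.sub hB).sub hC
  have hlow_val : ∫ y, ((-(1/2) * L - Real.log K + 1) * p y
      - (1/2 : ℝ) * (p y * q y) - K⁻¹ * (p y * m y)) = c - Real.log K := by
    have hAB : Integrable (fun y => (-(1/2) * L - Real.log K + 1) * p y
      - (1/2 : ℝ) * (p y * q y)) := hA.sub hB
    rw [integral_sub hAB hC, integral_sub hA hB, integral_const_mul, integral_const_mul,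
      integral_const_mul, hp_val, hpq_val, hpm_val, inv_mul_cancel₀ hKpos.ne', hc]
    ring
  have hlow : ∀ y, (-(1/2) * L - Real.log K + 1) * p y
      - (1/2 : ℝ) * (p y * q y) - K⁻¹ * (p y * m y) ≤ p y * Real.log (p y / m y) := by
    intro y
    have h1 : Real.log (m y / K) ≤ m y / K - 1 :=
      Real.log_le_sub_one_of_pos (div_pos (hmpos y) hKpos)
    rw [Real.log_div (hmpos y).ne' hKpos.ne'] at h1
    rw [Real.log_div (hppos y).ne' (hmpos y).ne', hlogp]
    have h2 := mul_le_mul_of_nonneg_left h1 (hppos y).le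
    have h3 : m y / K = K⁻¹ * m y := by rw [div_eq_mul_inv, mul_comm]
    rw [h3] at h2
    nlinarith [h2]
  set Q := (μ i - μ k) ⬝ᵥ (S⁻¹ *ᵥ (μ i - μ k)) with hQ
  have hup : ∀ y, p y * Real.log (p y / m y) ≤
      (Q - Real.log (α k)) * p y + (1/2 : ℝ) * (p y * q y) := by
    intro y
    have h1 := Real.log_le_log (mul_pos hk (gauss_pos d S hS _ _)) (hmk y)
    rw [Real.log_mul hk.ne' (gauss_pos d S hS _ _).ne', log_gauss d S hS] at h1
    have h2 := quad_bound d S hS (μ i) (μ k) y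
    rw [Real.log_div (hppos y).ne' (hmpos y).ne', hlogp]
    have h3 : -(1/2) * L - (1/2) * q y - Real.log (m y) ≤
      (Q - Real.log (α k)) + (1/2 : ℝ) * q y := by
      simp only [hq, hL, hQ] at *
      linarith
    have h4 := mul_le_mul_of_nonneg_left h3 (hppos y).le
    linarith [h4]
  have hmain : Integrable (fun y => p y * Real.log (p y / m y)) := by
    refine integrable_of_le_of_le ?_ (ae_of_all _ hlow) (ae_of_all _ hup) hlow_int
      ((hp_int.const_mul _).add hB)
    apply Continuous.aestronglyMeasurable
    exact hpcont.mul ((hpcont.div hmcont fun y => (hmpos y).ne').log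
      fun y => (div_pos (hppos y) (hmpos y)).ne')
  rw [ge_iff_le, ← hlow_val]
  exact integral_mono hlow_int hmain hlow
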